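/- Let P be a probability measure on a measurable space X, let H_1, ..., H_n be probability measures with densities with respect to a common sigma-finite dominating measure, let OPT := min over j of TV(H_j, P) achieved by H_{i*}, and define the maximum semi-distance W(H_j) := max over i in [n] of w_i(H_j). If Ĥ = H_k minimizes W(H_j) over all j in [n], then w_{i*}(Ĥ) <= OPT, and consequently TV(Ĥ, P) <= 3·OPT. -/

import Mathlib

/-!
A semi-distance compares a hypothesis with `P` on a single measurable set, so
`W(H_k) ≤ W(H_{i*}) ≤ TV(H_{i*}, P)`. The Scheffé set `S` of `H_{i*}` and `H_k` is a Hahn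
decomposition for these two measures and therefore attains `TV(H_k, H_{i*})`. Inserting `P S` gives
`TV(H_k, H_{i*}) ≤ w_{i*}(H_k) + TV(H_{i*}, P)`, and the triangle inequality through `H_{i*}` adds
one more `TV(H_{i*}, P)`.
-/

open MeasureTheory ENNReal

/-- Total variation distance: supremum over measurable sets of the absolute
difference of the masses. -/
noncomputable def tvDist {X : Type*} [MeasurableSpace X]
    (P Q : Measure X) : ℝ :=
  ⨆ S : {S : Set X // MeasurableSet S}, |(P S.1).toReal - (Q S.1).toReal|

/-- The Scheffé set `S_{i,j}` of the hypotheses with densities `h i`, `h j`. -/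
def scheffeSet {X : Type*} {n : ℕ} (h : Fin n → X → ℝ≥0∞) (i j : Fin n) :
    Set X :=
  if i ≤ j then {x | h i x < h j x} else {x | h j x < h i x}

/-- The semi-distance `w_i(H_j) := |H_j(S_{i,j}) - P(S_{i,j})|`. -/
noncomputable def semiDist {X : Type*} [MeasurableSpace X] {n : ℕ}
    (h : Fin n → X → ℝ≥0∞) (H : Fin n → Measure X) (P : Measure X)
    (i j : Fin n) : ℝ :=
  |(H j (scheffeSet h i j)).toReal - (P (scheffeSet h i j)).toReal|

section TotalVariation

variable {X : Type*} [MeasurableSpace X] {P Q R : Measure X} {S A : Set X}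

theorem tvDist_le {c : ℝ} (h : ∀ A, MeasurableSet A → |P.real A - Q.real A| ≤ c) :
    tvDist P Q ≤ c :=
  have : Nonempty {A : Set X // MeasurableSet A} := ⟨⟨∅, .empty⟩⟩
  ciSup_le fun A => h A.1 A.2

theorem tvDist_comm (P Q : Measure X) : tvDist P Q = tvDist Q P := by
  simp only [tvDist, abs_sub_comm]

theorem abs_measureReal_sub_le_tvDist [IsFiniteMeasure P] [IsFiniteMeasure Q]
    (hA : MeasurableSet A) : |P.real A - Q.real A| ≤ tvDist P Q := by
  refine le_ciSup (f := fun B : {B : Set X // MeasurableSet B} => |P.real B.1 - Q.real B.1|)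
    ⟨max (P.real Set.univ) (Q.real Set.univ), ?_⟩ ⟨A, hA⟩
  rintro _ ⟨B, rfl⟩
  exact abs_sub_le_of_nonneg_of_le
    measureReal_nonneg (le_max_of_le_left (measureReal_mono (Set.subset_univ _)))
    measureReal_nonneg (le_max_of_le_right (measureReal_mono (Set.subset_univ _)))

theorem tvDist_triangle [IsFiniteMeasure P] [IsFiniteMeasure Q] [IsFiniteMeasure R] :
    tvDist P R ≤ tvDist P Q + tvDist Q R :=
  tvDist_le fun _ hA => (abs_sub_le _ _ _).trans <|
    add_le_add (abs_measureReal_sub_le_tvDist hA) (abs_measureReal_sub_le_tvDist hA)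

theorem measureReal_le_of_restrict_le [IsFiniteMeasure Q] (h : P.restrict S ≤ Q.restrict S)
    (hAS : A ⊆ S) : P.real A ≤ Q.real A := by
  refine ENNReal.toReal_mono (measure_ne_top Q A) ?_
  simpa only [Measure.restrict_eq_self _ hAS] using h A

theorem measureReal_sub_le_of_isHahnDecomposition [IsFiniteMeasure P] [IsFiniteMeasure Q]
    (hS : IsHahnDecomposition P Q S) (hA : MeasurableSet A) :
    Q.real A - P.real A ≤ Q.real S - P.real S := by
  have outside : Q.real (A \ S) ≤ P.real (A \ S) :=
    measureReal_le_of_restrict_le hS.ge_on_compl fun _ hx => hx.2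
  have inside : P.real (S \ A) ≤ Q.real (S \ A) :=
    measureReal_le_of_restrict_le hS.le_on Set.sdiff_subset
  calc Q.real A - P.real A
      = Q.real (A ∩ S) - P.real (A ∩ S) + (Q.real (A \ S) - P.real (A \ S)) := by
        rw [← measureReal_inter_add_sdiff (μ := P) (s := A) hS.measurableSet,
          ← measureReal_inter_add_sdiff (μ := Q) (s := A) hS.measurableSet]
        ring
    _ ≤ Q.real (S ∩ A) - P.real (S ∩ A) + (Q.real (S \ A) - P.real (S \ A)) := by
        rw [Set.inter_comm]
        linarith
    _ = Q.real S - P.real S := by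
        rw [← measureReal_inter_add_sdiff (μ := P) (s := S) hA,
          ← measureReal_inter_add_sdiff (μ := Q) (s := S) hA]
        ring

theorem tvDist_eq_of_isHahnDecomposition [IsFiniteMeasure P] [IsFiniteMeasure Q]
    (hPQ : P.real Set.univ = Q.real Set.univ) (hS : IsHahnDecomposition P Q S) :
    tvDist P Q = |P.real S - Q.real S| := by
  refine le_antisymm (tvDist_le fun A hA => ?_) (abs_measureReal_sub_le_tvDist hS.measurableSet)
  have lower := measureReal_sub_le_of_isHahnDecomposition hS hA
  -- The measures have equal mass, so passing to `Aᶜ` flips the sign of the difference.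
  have upper := measureReal_sub_le_of_isHahnDecomposition hS hA.compl
  rw [measureReal_compl hA, measureReal_compl hA, hPQ, _root_.sub_sub_sub_cancel_left] at upper
  rw [abs_sub_comm (P.real S)]
  exact (abs_le'.2 ⟨upper, by rwa [neg_sub]⟩).trans (le_abs_self _)

theorem isHahnDecomposition_withDensity (μ : Measure X) {f g : X → ℝ≥0∞} (hf : Measurable f)
    (hg : Measurable g) :
    IsHahnDecomposition (μ.withDensity f) (μ.withDensity g) {x | f x < g x} where
  measurableSet := measurableSet_lt hf hg
  le_on := by
    have hS := measurableSet_lt hf hg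
    rw [restrict_withDensity hS, restrict_withDensity hS]
    exact withDensity_mono (ae_restrict_of_forall_mem hS fun _ hx => le_of_lt hx)
  ge_on_compl := by
    have hS := (measurableSet_lt hf hg).compl
    rw [restrict_withDensity hS, restrict_withDensity hS]
    exact withDensity_mono (ae_restrict_of_forall_mem hS fun _ hx => not_lt.1 hx)

end TotalVariation

section MinimumDistance

variable {X : Type*} [MeasurableSpace X] {n : ℕ} {h : Fin n → X → ℝ≥0∞} {H : Fin n → Measure X}
  {P : Measure X}

theorem measurableSet_scheffeSet (hmeas : ∀ i, Measurable (h i)) (i j : Fin n) :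
    MeasurableSet (scheffeSet h i j) := by
  unfold scheffeSet
  split_ifs
  · exact measurableSet_lt (hmeas i) (hmeas j)
  · exact measurableSet_lt (hmeas j) (hmeas i)

theorem tvDist_eq_abs_sub_scheffeSet {μ : Measure X} [∀ i, IsProbabilityMeasure (H i)]
    (hmeas : ∀ i, Measurable (h i)) (hdens : ∀ i, H i = μ.withDensity (h i)) (i j : Fin n) :
    tvDist (H i) (H j) = |(H i).real (scheffeSet h i j) - (H j).real (scheffeSet h i j)| := by
  have tvDist_eq (a b : Fin n) : tvDist (H a) (H b) =
      |(H a).real {x | h a x < h b x} - (H b).real {x | h a x < h b x}| := by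
    refine tvDist_eq_of_isHahnDecomposition (by simp only [probReal_univ]) ?_
    rw [hdens a, hdens b]
    exact isHahnDecomposition_withDensity μ (hmeas a) (hmeas b)
  unfold scheffeSet
  split_ifs
  · exact tvDist_eq i j
  · rw [tvDist_comm, abs_sub_comm]
    exact tvDist_eq j i

theorem semiDist_le_tvDist [∀ i, IsFiniteMeasure (H i)] [IsFiniteMeasure P]
    (hmeas : ∀ i, Measurable (h i)) (i j : Fin n) : semiDist h H P i j ≤ tvDist (H j) P :=
  abs_measureReal_sub_le_tvDist (measurableSet_scheffeSet hmeas i j)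

theorem tvDist_le_semiDist_add_two_mul_tvDist {μ : Measure X} [∀ i, IsProbabilityMeasure (H i)]
    [IsFiniteMeasure P] (hmeas : ∀ i, Measurable (h i))
    (hdens : ∀ i, H i = μ.withDensity (h i)) (i j : Fin n) :
    tvDist (H j) P ≤ semiDist h H P i j + 2 * tvDist (H i) P := by
  set S := scheffeSet h i j
  calc tvDist (H j) P
      ≤ tvDist (H j) (H i) + tvDist (H i) P := tvDist_triangle
    _ = |(H j).real S - (H i).real S| + tvDist (H i) P := by
        rw [tvDist_comm, tvDist_eq_abs_sub_scheffeSet hmeas hdens, abs_sub_comm]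
    _ ≤ |(H j).real S - P.real S| + |P.real S - (H i).real S| + tvDist (H i) P := by
        gcongr
        exact abs_sub_le _ _ _
    _ ≤ |(H j).real S - P.real S| + tvDist (H i) P + tvDist (H i) P := by
        gcongr
        rw [abs_sub_comm]
        exact abs_measureReal_sub_le_tvDist (measurableSet_scheffeSet hmeas i j)
    _ = semiDist h H P i j + 2 * tvDist (H i) P := by
        rw [add_assoc, ← two_mul]
        rfl

/-- The maximum semi-distance `W(H_j)`, whose minimizer over `j` is the minimum distance estimate.
The supremum is a maximum because the index type is finite and contains `j`. -/
noncomputable def maxSemiDist (h : Fin n → X → ℝ≥0∞) (H : Fin n → Measure X) (P : Measure X)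
    (j : Fin n) : ℝ :=
  ⨆ i, semiDist h H P i j

theorem semiDist_le_maxSemiDist (i j : Fin n) : semiDist h H P i j ≤ maxSemiDist h H P j :=
  le_ciSup (f := fun i => semiDist h H P i j) (Set.finite_range _).bddAbove i

theorem maxSemiDist_le_tvDist [∀ i, IsFiniteMeasure (H i)] [IsFiniteMeasure P]
    (hmeas : ∀ i, Measurable (h i)) (j : Fin n) : maxSemiDist h H P j ≤ tvDist (H j) P :=
  have : Nonempty (Fin n) := ⟨j⟩
  ciSup_le fun i => semiDist_le_tvDist hmeas i j

theorem mde_three_opt_general {μ : Measure X} [∀ i, IsProbabilityMeasure (H i)]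
    [IsFiniteMeasure P] (hmeas : ∀ i, Measurable (h i))
    (hdens : ∀ i, H i = μ.withDensity (h i)) {i k : Fin n}
    (hk : maxSemiDist h H P k ≤ maxSemiDist h H P i) :
    semiDist h H P i k ≤ tvDist (H i) P ∧ tvDist (H k) P ≤ 3 * tvDist (H i) P := by
  have semiDist_le : semiDist h H P i k ≤ tvDist (H i) P :=
    (semiDist_le_maxSemiDist i k).trans (hk.trans (maxSemiDist_le_tvDist hmeas i))
  refine ⟨semiDist_le, ?_⟩
  calc tvDist (H k) P
      ≤ semiDist h H P i k + 2 * tvDist (H i) P :=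
        tvDist_le_semiDist_add_two_mul_tvDist hmeas hdens i k
    _ ≤ tvDist (H i) P + 2 * tvDist (H i) P := by gcongr
    _ = 3 * tvDist (H i) P := by ring

end MinimumDistance

/-- If `Ĥ = H k` minimizes the maximum semi-distance
`W(H_j) := max_i w_i(H_j)`, then `w_{i*}(Ĥ) ≤ OPT` and `TV(Ĥ, P) ≤ 3·OPT`. -/
theorem mde_three_opt {X : Type*} [MeasurableSpace X]
    (μ : Measure X) [SigmaFinite μ] {n : ℕ} (hn : 0 < n)
    (H : Fin n → Measure X) [∀ i, IsProbabilityMeasure (H i)]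
    (P : Measure X) [IsProbabilityMeasure P]
    (h : Fin n → X → ℝ≥0∞) (hmeas : ∀ i, Measurable (h i))
    (hdens : ∀ i, H i = μ.withDensity (h i))
    (istar : Fin n) (hopt : ∀ j, tvDist (H istar) P ≤ tvDist (H j) P)
    (W : Fin n → ℝ)
    (hW : ∀ j, W j = ⨆ i : Fin n, semiDist h H P i j)
    (k : Fin n) (hk : ∀ j, W k ≤ W j) :
    semiDist h H P istar k ≤ tvDist (H istar) P ∧
      tvDist (H k) P ≤ 3 * tvDist (H istar) P := by
  obtain rfl : W = maxSemiDist h H P := funext hW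
  exact mde_three_opt_general hmeas hdens (hk istar)
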